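/- Let G be a bipartite graph with parts U and W and strict cardinal preferences sat. If M₁ and M₂ are ordinally stable fractional matchings, then M₁ ∨ M₂ and M₁ ∧ M₂ are again ordinally stable fractional matchings; consequently, the set of all ordinally stable fractional matchings of (G, sat), partially ordered by weak U-domination ≽_U, forms a distributive lattice with join ∨ and meet ∧. -/

import Mathlib

open Finset
open scoped Classical

variable {V : Type*}

/-- Two agents find each other acceptable iff at least one of them assigns
positive satisfaction to the other. -/
def Adj (sat : V → V → ℚ) (u v : V) : Prop :=
  0 < sat u v ∨ 0 < sat v u

instance (sat : V → V → ℚ) (u v : V) : Decidable (Adj sat u v) :=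
  inferInstanceAs (Decidable (0 < sat u v ∨ 0 < sat v u))

/-- `sat` describes a valid instance: satisfactions are nonnegative, an agent has
zero satisfaction towards itself, and the acceptability graph has no isolated vertices. -/
structure IsInstance [Fintype V] (sat : V → V → ℚ) : Prop where
  nonneg : ∀ u v, 0 ≤ sat u v
  sat_self : ∀ u, sat u u = 0
  noIsolated : ∀ v, ∃ u, Adj sat v u

/-- `M` is a fractional matching of the acceptability graph of `sat`. -/
structure IsMatching [Fintype V] (sat : V → V → ℚ) (M : V → V → ℝ) : Prop where
  symm : ∀ u v, M u v = M v u
  nonneg : ∀ u v, 0 ≤ M u v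
  support : ∀ u v, ¬ Adj sat u v → M u v = 0
  degree_le_one : ∀ v, ∑ u, M v u ≤ 1

/-- `M(x, ≽ y)`: total matching value of `x` with neighbours liked at least as much as `y`. -/
noncomputable def wge [Fintype V] (sat : V → V → ℚ) (M : V → V → ℝ) (x y : V) : ℝ :=
  ∑ z ∈ Finset.univ.filter (fun z => Adj sat x z ∧ sat x y ≤ sat x z), M x z

/-- `M(x, ≻ y)`: total matching value of `x` with neighbours strictly preferred to `y`. -/
noncomputable def wgt [Fintype V] (sat : V → V → ℚ) (M : V → V → ℝ) (x y : V) : ℝ :=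
  ∑ z ∈ Finset.univ.filter (fun z => Adj sat x z ∧ sat x y < sat x z), M x z

/-- Utility of agent `v` under matching `M`. -/
noncomputable def util [Fintype V] (sat : V → V → ℚ) (M : V → V → ℝ) (v : V) : ℝ :=
  ∑ u, (sat v u : ℝ) * M v u

/-- Social welfare of a matching. -/
noncomputable def welfare [Fintype V] (sat : V → V → ℚ) (M : V → V → ℝ) : ℝ :=
  ∑ v, util sat M v

/-- Ordinal stability: no edge is ordinally blocking. -/
def OrdStable [Fintype V] (sat : V → V → ℚ) (M : V → V → ℝ) : Prop :=
  ∀ u v, Adj sat u v → ¬ (wge sat M u v < 1 ∧ wge sat M v u < 1)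

/-- Cardinal stability: no edge is cardinally blocking. -/
def CardStable [Fintype V] (sat : V → V → ℚ) (M : V → V → ℝ) : Prop :=
  ∀ u v, Adj sat u v → ¬ (util sat M u < (sat u v : ℝ) ∧ util sat M v < (sat v u : ℝ))

/-- Linear stability: no edge is linearly blocking. -/
def LinStable [Fintype V] (sat : V → V → ℚ) (M : V → V → ℝ) : Prop :=
  ∀ u v, Adj sat u v → ¬ (wge sat M u v + wge sat M v u - M u v < 1)

/-- Strict preferences: no ties among distinct neighbours. -/
def StrictPrefs (sat : V → V → ℚ) : Prop :=
  ∀ v x y, Adj sat v x → Adj sat v y → x ≠ y → sat v x ≠ sat v y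

/-- The acceptability graph is bipartite with parts `U` and its complement. -/
def BipartiteWith (sat : V → V → ℚ) (U : Set V) : Prop :=
  ∀ u v, Adj sat u v → (u ∈ U ↔ v ∉ U)

/-- Integral matching. -/
def IntegralMatching (M : V → V → ℝ) : Prop := ∀ u v, M u v = 0 ∨ M u v = 1

/-- Number of fully matched agents. -/
noncomputable def nfully [Fintype V] (M : V → V → ℝ) : ℕ :=
  (Finset.univ.filter (fun v => ∑ u, M v u = (1 : ℝ))).card

/-- The join `M₁ ∨ M₂` of two fractional matchings of a bipartite graph with part `U`. -/
noncomputable def osmJoin [Fintype V] (sat : V → V → ℚ) (U : Set V)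
    (M₁ M₂ : V → V → ℝ) : V → V → ℝ := fun a b =>
  if Adj sat a b then
    if a ∈ U then
      max (wge sat M₁ a b) (wge sat M₂ a b) - max (wgt sat M₁ a b) (wgt sat M₂ a b)
    else
      max (wge sat M₁ b a) (wge sat M₂ b a) - max (wgt sat M₁ b a) (wgt sat M₂ b a)
  else 0

/-- The meet `M₁ ∧ M₂` of two fractional matchings of a bipartite graph with part `U`. -/
noncomputable def osmMeet [Fintype V] (sat : V → V → ℚ) (U : Set V)
    (M₁ M₂ : V → V → ℝ) : V → V → ℝ := fun a b =>
  if Adj sat a b then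
    if a ∈ U then
      min (wge sat M₁ a b) (wge sat M₂ a b) - min (wgt sat M₁ a b) (wgt sat M₂ a b)
    else
      min (wge sat M₁ b a) (wge sat M₂ b a) - min (wgt sat M₁ b a) (wgt sat M₂ b a)
  else 0

/-- Weak `U`-domination: `M₁ ≽_U M₂`. -/
def DomU [Fintype V] (sat : V → V → ℚ) (U : Set V) (M₁ M₂ : V → V → ℝ) : Prop :=
  ∀ x y, x ∈ U → Adj sat x y → wge sat M₂ x y ≤ wge sat M₁ x y

/-!
Strictness lets sums of increments along one agent's preference list telescope. Hence the join has
cumulative weights `max (M₁(x, ≽ y)) (M₂(x, ≽ y))` at every `x ∈ U`, the meet has the corresponding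
minima, and `M ↦ (M(x, ≽ y))`, over the edges with `x ∈ U`, embeds the stable matchings into a power
of `ℝ`, compatibly with `∨`, `∧` and `≽_U`. Distributivity is inherited from `ℝ`; the substance is
that join and meet are stable matchings.

*Tightness.* Stability gives `M(u, ≽ w) + M(w, ≻ u) ≥ 1` on every edge. Weighting by `M` and
summing, the left-hand side telescopes to `∑ d(v) ^ 2` and the right-hand side is `∑ d(v)`, where
`d(v) ≤ 1` is the degree. So equality holds on the support of `M`.

*Duality.* By tightness, the `U`-join lies edgewise below the `Uᶜ`-meet, and likewise the `Uᶜ`-join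
lies below the `U`-meet. The total weight of a function on the edges is twice its weight at either
side, and at each vertex of a side the meet of that side has at most the degree of its join. Hence
total weights satisfy `U`-join `≤` `Uᶜ`-meet `≤` `Uᶜ`-join `≤` `U`-meet `≤` `U`-join, and the
`U`-join equals the `Uᶜ`-meet. The join therefore carries maxima at `U` and minima at `Uᶜ`, which
bounds its degrees and rules out blocking edges.
-/

theorem sum_filter_le_sub_filter_lt {ι R G : Type*} [LinearOrder R] [AddCommGroup G] (r : ι → R)
    (H : Finset ι → G) (S : Finset ι) (hr : Set.InjOn r S) :
    ∑ z ∈ S, (H {y ∈ S | r z ≤ r y} - H {y ∈ S | r z < r y}) = H S - H ∅ := by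
  induction S using Finset.induction_on_min_value r with
  | empty => simp
  | insert a s ha hmin ih =>
    have hlt : ∀ x ∈ s, r a < r x := fun x hx ↦ (hmin x hx).lt_of_ne fun h ↦
      ha (hr (mem_insert_self a s) (mem_insert_of_mem hx) h ▸ hx)
    have weak_at_min : {y ∈ insert a s | r a ≤ r y} = insert a s :=
      filter_true_of_mem (by simpa using hmin)
    have strict_at_min : {y ∈ insert a s | r a < r y} = s := by
      rw [filter_insert, if_neg (lt_irrefl _), filter_true_of_mem hlt]
    have above_min : ∑ z ∈ s, (H {y ∈ insert a s | r z ≤ r y} - H {y ∈ insert a s | r z < r y}) =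
        H s - H ∅ := by
      rw [← ih (hr.mono (by simp))]
      refine sum_congr rfl fun z hz ↦ ?_
      rw [filter_insert, filter_insert, if_neg (hlt z hz).not_ge, if_neg (hlt z hz).le.not_gt]
    rw [sum_insert ha, weak_at_min, strict_at_min, above_min, sub_add_sub_cancel]

theorem eq_of_le_of_sum_sum_le {ι κ R : Type*} [Fintype ι] [Fintype κ] [AddCommMonoid R]
    [PartialOrder R] [IsOrderedCancelAddMonoid R] {f g : ι → κ → R} (hle : f ≤ g)
    (hsum : ∑ i, ∑ j, g i j ≤ ∑ i, ∑ j, f i j) : f = g := by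
  refine hle.eq_of_not_lt fun hlt ↦ hsum.not_gt ?_
  obtain ⟨-, i, hi⟩ := Pi.lt_def.1 hlt
  exact sum_lt_sum (fun k _ ↦ sum_le_sum fun j _ ↦ hle k j)
    ⟨i, mem_univ i, Fintype.sum_strictMono hi⟩

theorem max_add_min_le_max_add_min {R : Type*} [CommRing R] [LinearOrder R] [IsStrictOrderedRing R]
    {a b m p q : R} (hm : 0 ≤ m) (h : m ≠ 0 → m + a + b ≤ p + q) :
    max (m + a) p + min b q ≤ max a p + min (m + b) q := by
  rcases eq_or_ne m 0 with rfl | hm0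
  · simp
  · have := h hm0
    grind

section Acceptability

variable {sat : V → V → ℚ} {U : Set V}

theorem Adj.symm {u v : V} (huv : Adj sat u v) : Adj sat v u :=
  Or.symm huv

theorem BipartiteWith.compl (hbip : BipartiteWith sat U) : BipartiteWith sat Uᶜ := fun u v huv ↦ by
  simp only [Set.mem_compl_iff, hbip u v huv]

theorem BipartiteWith.forall_adj_of_symm (hbip : BipartiteWith sat U) {P : V → V → Prop}
    (hsymm : ∀ u v, P u v → P v u) (hU : ∀ u ∈ U, ∀ v, Adj sat u v → P u v) {u v : V}
    (huv : Adj sat u v) : P u v := by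
  by_cases hu : u ∈ U
  · exact hU u hu v huv
  · have hv : v ∈ U := by_contra fun hv ↦ hu ((hbip u v huv).2 hv)
    exact hsymm v u (hU v hv u huv.symm)

theorem sum_filter_adj_eq_sum [Fintype V] {R : Type*} [AddCommMonoid R] {g : V → R} {x : V}
    (hg : ∀ y, ¬ Adj sat x y → g y = 0) : ∑ y with Adj sat x y, g y = ∑ y, g y :=
  sum_filter_of_ne fun y _ hgy ↦ not_not.1 fun hxy ↦ hgy (hg y hxy)

end Acceptability

section EdgeWeight

/-- `N` is a weighting of the undirected edges of the acceptability graph, encoded as a symmetric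
function that vanishes off the edges. Unlike for a fractional matching, weights may be negative and
degrees are not bounded. -/
structure IsEdgeWeight (sat : V → V → ℚ) (N : V → V → ℝ) : Prop where
  symm : ∀ u v, N u v = N v u
  support : ∀ u v, ¬ Adj sat u v → N u v = 0

variable {sat : V → V → ℚ} {U : Set V} {N N' : V → V → ℝ}

theorem IsMatching.isEdgeWeight [Fintype V] (hN : IsMatching sat N) : IsEdgeWeight sat N :=
  ⟨hN.symm, hN.support⟩

namespace IsEdgeWeight

theorem le_of_forall_mem (hN : IsEdgeWeight sat N) (hN' : IsEdgeWeight sat N')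
    (hbip : BipartiteWith sat U) (hU : ∀ x ∈ U, ∀ y, Adj sat x y → N x y ≤ N' x y) : N ≤ N' := by
  intro x y
  by_cases hxy : Adj sat x y
  · exact hbip.forall_adj_of_symm (P := fun x y ↦ N x y ≤ N' x y)
      (fun u v h ↦ by rwa [hN.symm, hN'.symm]) hU hxy
  · rw [hN.support x y hxy, hN'.support x y hxy]

variable [Fintype V]

theorem sum_mem_eq_sum_notMem (hN : IsEdgeWeight sat N) (hbip : BipartiteWith sat U) :
    ∑ x with x ∈ U, ∑ y, N x y = ∑ x with x ∉ U, ∑ y, N x y := by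
  calc ∑ x with x ∈ U, ∑ y, N x y
      = ∑ x, ∑ y, if x ∈ U then N x y else 0 := by
        simp only [sum_filter, sum_ite_irrel, sum_const_zero]
    _ = ∑ y, ∑ x, if x ∈ U then N x y else 0 := sum_comm
    _ = ∑ y, ∑ x, if y ∉ U then N y x else 0 := by
        refine sum_congr rfl fun y _ ↦ sum_congr rfl fun x _ ↦ ?_
        by_cases hxy : Adj sat x y
        · simp only [hbip x y hxy, hN.symm x y]
        · simp only [hN.symm y x, hN.support x y hxy, ite_self]
    _ = ∑ y with y ∉ U, ∑ x, N y x := by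
        simp only [sum_filter, sum_ite_irrel, sum_const_zero]

theorem sum_sum_le_of_forall_mem (hN : IsEdgeWeight sat N) (hN' : IsEdgeWeight sat N')
    (hbip : BipartiteWith sat U) (hU : ∀ x ∈ U, ∑ y, N x y ≤ ∑ y, N' x y) :
    ∑ x, ∑ y, N x y ≤ ∑ x, ∑ y, N' x y := by
  have side_le : ∑ x with x ∈ U, ∑ y, N x y ≤ ∑ x with x ∈ U, ∑ y, N' x y :=
    sum_le_sum fun x hx ↦ hU x (mem_filter.1 hx).2
  rw [← sum_filter_add_sum_filter_not univ (· ∈ U) fun x ↦ ∑ y, N x y,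
    ← sum_filter_add_sum_filter_not univ (· ∈ U) fun x ↦ ∑ y, N' x y,
    ← hN.sum_mem_eq_sum_notMem hbip, ← hN'.sum_mem_eq_sum_notMem hbip]
  exact add_le_add side_le side_le

end IsEdgeWeight

end EdgeWeight

section CumulativeWeight

variable [Fintype V] {sat : V → V → ℚ} {M N : V → V → ℝ} {x y : V}

theorem StrictPrefs.sum_increments {G : Type*} [AddCommGroup G] (hstrict : StrictPrefs sat)
    (H : Finset V → G) {S : Finset V} (hadj : ∀ z ∈ S, Adj sat x z)
    (hupper : ∀ z ∈ S, ∀ y, Adj sat x y → sat x z ≤ sat x y → y ∈ S) :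
    ∑ z ∈ S, (H {y | Adj sat x y ∧ sat x z ≤ sat x y} - H {y | Adj sat x y ∧ sat x z < sat x y}) =
      H S - H ∅ := by
  have hinj : Set.InjOn (sat x) S := fun a ha b hb hab ↦
    by_contra fun hne ↦ hstrict x a b (hadj a ha) (hadj b hb) hne hab
  rw [← sum_filter_le_sub_filter_lt (sat x) H S hinj]
  refine sum_congr rfl fun z hz ↦ ?_
  congr 2 <;> ext y <;> simp only [mem_filter, mem_univ, true_and]
  · exact ⟨fun h ↦ ⟨hupper z hz y h.1 h.2, h.2⟩, fun h ↦ ⟨hadj y h.1, h.2⟩⟩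
  · exact ⟨fun h ↦ ⟨hupper z hz y h.1 h.2.le, h.2⟩, fun h ↦ ⟨hadj y h.1, h.2⟩⟩

theorem StrictPrefs.wge_eq_add_wgt (hstrict : StrictPrefs sat) (M : V → V → ℝ)
    (hxy : Adj sat x y) : wge sat M x y = M x y + wgt sat M x y := by
  have hy : y ∉ ({z | Adj sat x z ∧ sat x y < sat x z} : Finset V) := by simp
  rw [wge, wgt, ← sum_insert hy]
  congr 1
  ext z
  simp only [mem_filter, mem_univ, true_and, mem_insert]
  constructor
  · rintro ⟨hxz, hle⟩
    exact or_iff_not_imp_left.2 fun hzy ↦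
      ⟨hxz, hle.lt_of_ne (hstrict x y z hxy hxz (Ne.symm hzy))⟩
  · rintro (rfl | ⟨hxz, hlt⟩)
    · exact ⟨hxy, le_rfl⟩
    · exact ⟨hxz, hlt.le⟩

theorem wgt_le_wge (hM : ∀ z, 0 ≤ M x z) (y : V) : wgt sat M x y ≤ wge sat M x y :=
  sum_le_sum_of_subset_of_nonneg (monotone_filter_right _ fun _ _ h ↦ ⟨h.1, h.2.le⟩)
    fun z _ _ ↦ hM z

theorem StrictPrefs.eq_of_wge_eq (hstrict : StrictPrefs sat)
    (hwge : ∀ y, Adj sat x y → wge sat M x y = wge sat N x y) (hxy : Adj sat x y) :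
    M x y = N x y := by
  by_contra hne
  obtain ⟨z, hz, hmax⟩ := exists_max_image {z | Adj sat x z ∧ M x z ≠ N x z} (sat x)
    ⟨y, by simp [hxy, hne]⟩
  simp only [mem_filter, mem_univ, true_and] at hz hmax
  have hwgt : wgt sat M x z = wgt sat N x z := sum_congr rfl fun w hw ↦ by
    obtain ⟨hxw, hlt⟩ := (mem_filter.1 hw).2
    exact by_contra fun hw ↦ (hmax w ⟨hxw, hw⟩).not_gt hlt
  have := hwge z hz.1
  rw [hstrict.wge_eq_add_wgt M hz.1, hstrict.wge_eq_add_wgt N hz.1, hwgt] at this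
  exact hz.2 (add_right_cancel this)

end CumulativeWeight

section Tightness

variable [Fintype V] {sat : V → V → ℚ} {M : V → V → ℝ} {x y : V}

theorem OrdStable.one_le_wge_add_wgt (hs : OrdStable sat M) (hM : IsMatching sat M)
    (hstrict : StrictPrefs sat) (hxy : Adj sat x y) : 1 ≤ wge sat M x y + wgt sat M y x := by
  have hx := hstrict.wge_eq_add_wgt M hxy
  have hy := hstrict.wge_eq_add_wgt M hxy.symm
  have hsymm := hM.symm x y
  have hwgt_x : 0 ≤ wgt sat M x y := sum_nonneg fun z _ ↦ hM.nonneg x z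
  have hwgt_y : 0 ≤ wgt sat M y x := sum_nonneg fun z _ ↦ hM.nonneg y z
  by_contra! hlt
  exact hs x y hxy ⟨by linarith, by linarith⟩

theorem StrictPrefs.sum_mul_wge_add_wgt (hstrict : StrictPrefs sat)
    (hM : ∀ y, ¬ Adj sat x y → M x y = 0) :
    ∑ y, M x y * (wge sat M x y + wgt sat M x y) = (∑ y, M x y) ^ 2 := by
  calc ∑ y, M x y * (wge sat M x y + wgt sat M x y)
      = ∑ y with Adj sat x y, M x y * (wge sat M x y + wgt sat M x y) :=
        (sum_filter_adj_eq_sum fun y hxy ↦ by rw [hM y hxy, zero_mul]).symm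
    _ = ∑ y with Adj sat x y, (wge sat M x y ^ 2 - wgt sat M x y ^ 2) := by
        refine sum_congr rfl fun y hy ↦ ?_
        rw [hstrict.wge_eq_add_wgt M (mem_filter.1 hy).2]
        ring
    _ = (∑ y with Adj sat x y, M x y) ^ 2 := by
        have := hstrict.sum_increments (x := x) (fun T ↦ (∑ z ∈ T, M x z) ^ 2)
          (S := {y | Adj sat x y}) (by simp) (by simp +contextual)
        simpa [wge, wgt] using this
    _ = (∑ y, M x y) ^ 2 := by rw [sum_filter_adj_eq_sum hM]

theorem IsEdgeWeight.sum_mul_wge_add_wgt_swap_sub_one (hM : IsEdgeWeight sat M)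
    (hstrict : StrictPrefs sat) :
    ∑ x, ∑ y, M x y * (wge sat M x y + wgt sat M y x - 1) =
      ∑ x, ((∑ y, M x y) ^ 2 - ∑ y, M x y) := by
  have hswap : ∑ x, ∑ y, M x y * wgt sat M y x = ∑ x, ∑ y, M x y * wgt sat M x y := by
    rw [sum_comm]
    exact sum_congr rfl fun x _ ↦ sum_congr rfl fun y _ ↦ by rw [hM.symm]
  simp only [← hstrict.sum_mul_wge_add_wgt (hM.support _), mul_sub, mul_add, sum_sub_distrib,
    sum_add_distrib, mul_one, hswap]

theorem OrdStable.wge_add_wgt_eq_one (hs : OrdStable sat M) (hM : IsMatching sat M)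
    (hstrict : StrictPrefs sat) (hxy : M x y ≠ 0) : wge sat M x y + wgt sat M y x = 1 := by
  have hnonneg : ∀ a b, 0 ≤ M a b * (wge sat M a b + wgt sat M b a - 1) := by
    intro a b
    by_cases hab : Adj sat a b
    · exact mul_nonneg (hM.nonneg a b) (sub_nonneg.2 (hs.one_le_wge_add_wgt hM hstrict hab))
    · rw [hM.support a b hab, zero_mul]
  have hsum : ∑ a, ∑ b, M a b * (wge sat M a b + wgt sat M b a - 1) ≤ 0 := by
    rw [hM.isEdgeWeight.sum_mul_wge_add_wgt_swap_sub_one hstrict]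
    refine sum_nonpos fun a _ ↦ sub_nonpos.2 ?_
    exact pow_le_of_le_one (sum_nonneg fun b _ ↦ hM.nonneg a b) (hM.degree_le_one a) two_ne_zero
  have hzero : (0 : V → V → ℝ) = fun a b ↦ M a b * (wge sat M a b + wgt sat M b a - 1) :=
    eq_of_le_of_sum_sum_le hnonneg (by simpa using hsum)
  have hxy_zero : M x y * (wge sat M x y + wgt sat M y x - 1) = 0 :=
    (congrFun₂ hzero x y).symm
  exact sub_eq_zero.1 ((mul_eq_zero.1 hxy_zero).resolve_left hxy)

end Tightness

section Combine

/-- The function on the edges whose cumulative weights at `U` are `f (M₁(x, ≽ y)) (M₂(x, ≽ y))`;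
`f = max` gives the join `osmJoin`, and `f = min` the meet `osmMeet`. -/
noncomputable def osmCombine [Fintype V] (sat : V → V → ℚ) (U : Set V) (f : ℝ → ℝ → ℝ)
    (M₁ M₂ : V → V → ℝ) : V → V → ℝ := fun a b ↦
  if Adj sat a b then
    if a ∈ U then
      f (wge sat M₁ a b) (wge sat M₂ a b) - f (wgt sat M₁ a b) (wgt sat M₂ a b)
    else
      f (wge sat M₁ b a) (wge sat M₂ b a) - f (wgt sat M₁ b a) (wgt sat M₂ b a)
  else 0

variable [Fintype V] {sat : V → V → ℚ} {U : Set V} {M₁ M₂ : V → V → ℝ} {f : ℝ → ℝ → ℝ} {x y : V}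

theorem osmCombine_apply (hx : x ∈ U) (hxy : Adj sat x y) :
    osmCombine sat U f M₁ M₂ x y =
      f (wge sat M₁ x y) (wge sat M₂ x y) - f (wgt sat M₁ x y) (wgt sat M₂ x y) := by
  rw [osmCombine, if_pos hxy, if_pos hx]

theorem osmCombine_eq_zero (hxy : ¬ Adj sat x y) : osmCombine sat U f M₁ M₂ x y = 0 :=
  if_neg hxy

theorem osmCombine_isEdgeWeight (hbip : BipartiteWith sat U) (f : ℝ → ℝ → ℝ) (M₁ M₂ : V → V → ℝ) :
    IsEdgeWeight sat (osmCombine sat U f M₁ M₂) where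
  support _ _ := osmCombine_eq_zero
  symm a b := by
    by_cases hab : Adj sat a b
    · refine hbip.forall_adj_of_symm
        (P := fun u v ↦ osmCombine sat U f M₁ M₂ u v = osmCombine sat U f M₁ M₂ v u)
        (fun u v ↦ Eq.symm) (fun u hu v huv ↦ ?_) hab
      have hv : v ∉ U := (hbip u v huv).1 hu
      simp only [osmCombine, huv, huv.symm, hu, hv, if_true, if_false]
    · rw [osmCombine_eq_zero hab, osmCombine_eq_zero fun hba ↦ hab hba.symm]

theorem sum_osmCombine_of_upper (hstrict : StrictPrefs sat) (hf : f 0 0 = 0) (hx : x ∈ U)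
    {S : Finset V} (hadj : ∀ z ∈ S, Adj sat x z)
    (hupper : ∀ z ∈ S, ∀ y, Adj sat x y → sat x z ≤ sat x y → y ∈ S) :
    ∑ z ∈ S, osmCombine sat U f M₁ M₂ x z = f (∑ z ∈ S, M₁ x z) (∑ z ∈ S, M₂ x z) := by
  rw [sum_congr rfl fun z hz ↦ osmCombine_apply hx (hadj z hz)]
  have := hstrict.sum_increments (fun T ↦ f (∑ z ∈ T, M₁ x z) (∑ z ∈ T, M₂ x z)) hadj hupper
  simpa only [wge, wgt, sum_empty, hf, sub_zero] using this

theorem wge_osmCombine (hstrict : StrictPrefs sat) (hf : f 0 0 = 0) (hx : x ∈ U) :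
    wge sat (osmCombine sat U f M₁ M₂) x y = f (wge sat M₁ x y) (wge sat M₂ x y) := by
  refine sum_osmCombine_of_upper hstrict hf hx (by simp +contextual) fun z hz w hxw hzw ↦ ?_
  exact mem_filter.2 ⟨mem_univ w, hxw, (mem_filter.1 hz).2.2.trans hzw⟩

theorem sum_osmCombine (hstrict : StrictPrefs sat) (hf : f 0 0 = 0) (hx : x ∈ U)
    (h₁ : ∀ y, ¬ Adj sat x y → M₁ x y = 0) (h₂ : ∀ y, ¬ Adj sat x y → M₂ x y = 0) :
    ∑ y, osmCombine sat U f M₁ M₂ x y = f (∑ y, M₁ x y) (∑ y, M₂ x y) := by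
  rw [← sum_filter_adj_eq_sum fun y ↦ osmCombine_eq_zero, ← sum_filter_adj_eq_sum h₁,
    ← sum_filter_adj_eq_sum h₂]
  exact sum_osmCombine_of_upper hstrict hf hx (by simp) (by simp +contextual)

end Combine

section JoinMeet

variable [Fintype V] {sat : V → V → ℚ} {U : Set V} {M₁ M₂ : V → V → ℝ} {x y : V}

theorem osmJoin_isEdgeWeight (hbip : BipartiteWith sat U) (M₁ M₂ : V → V → ℝ) :
    IsEdgeWeight sat (osmJoin sat U M₁ M₂) :=
  osmCombine_isEdgeWeight hbip max M₁ M₂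

theorem osmMeet_isEdgeWeight (hbip : BipartiteWith sat U) (M₁ M₂ : V → V → ℝ) :
    IsEdgeWeight sat (osmMeet sat U M₁ M₂) :=
  osmCombine_isEdgeWeight hbip min M₁ M₂

theorem wge_osmJoin (hstrict : StrictPrefs sat) (hx : x ∈ U) :
    wge sat (osmJoin sat U M₁ M₂) x y = max (wge sat M₁ x y) (wge sat M₂ x y) :=
  wge_osmCombine hstrict (max_self 0) hx

theorem wge_osmMeet (hstrict : StrictPrefs sat) (hx : x ∈ U) :
    wge sat (osmMeet sat U M₁ M₂) x y = min (wge sat M₁ x y) (wge sat M₂ x y) :=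
  wge_osmCombine hstrict (min_self 0) hx

theorem sum_osmJoin (hstrict : StrictPrefs sat) (hx : x ∈ U)
    (h₁ : ∀ y, ¬ Adj sat x y → M₁ x y = 0) (h₂ : ∀ y, ¬ Adj sat x y → M₂ x y = 0) :
    ∑ y, osmJoin sat U M₁ M₂ x y = max (∑ y, M₁ x y) (∑ y, M₂ x y) :=
  sum_osmCombine hstrict (max_self 0) hx h₁ h₂

theorem sum_osmMeet (hstrict : StrictPrefs sat) (hx : x ∈ U)
    (h₁ : ∀ y, ¬ Adj sat x y → M₁ x y = 0) (h₂ : ∀ y, ¬ Adj sat x y → M₂ x y = 0) :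
    ∑ y, osmMeet sat U M₁ M₂ x y = min (∑ y, M₁ x y) (∑ y, M₂ x y) :=
  sum_osmCombine hstrict (min_self 0) hx h₁ h₂

theorem sum_sum_osmMeet_le_sum_sum_osmJoin (hstrict : StrictPrefs sat)
    (hbip : BipartiteWith sat U) (h₁ : ∀ x y, ¬ Adj sat x y → M₁ x y = 0)
    (h₂ : ∀ x y, ¬ Adj sat x y → M₂ x y = 0) :
    ∑ x, ∑ y, osmMeet sat U M₁ M₂ x y ≤ ∑ x, ∑ y, osmJoin sat U M₁ M₂ x y := by
  refine (osmMeet_isEdgeWeight hbip M₁ M₂).sum_sum_le_of_forall_mem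
    (osmJoin_isEdgeWeight hbip M₁ M₂) hbip fun x hx ↦ ?_
  rw [sum_osmMeet hstrict hx (h₁ x) (h₂ x), sum_osmJoin hstrict hx (h₁ x) (h₂ x)]
  exact min_le_max

theorem osmJoin_nonneg (h₁ : ∀ u v, 0 ≤ M₁ u v) (h₂ : ∀ u v, 0 ≤ M₂ u v) (a b : V) :
    0 ≤ osmJoin sat U M₁ M₂ a b := by
  have increment_nonneg : ∀ u v,
      0 ≤ max (wge sat M₁ u v) (wge sat M₂ u v) - max (wgt sat M₁ u v) (wgt sat M₂ u v) :=
    fun u v ↦ sub_nonneg.2 (max_le_max (wgt_le_wge (h₁ u) v) (wgt_le_wge (h₂ u) v))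
  rw [osmJoin]
  split_ifs
  · exact increment_nonneg a b
  · exact increment_nonneg b a
  · exact le_rfl

end JoinMeet

section Duality

variable [Fintype V] {sat : V → V → ℚ} {U : Set V} {M₁ M₂ : V → V → ℝ} {x y : V}

theorem max_wge_sub_max_wgt_le_min_wge_sub_min_wgt (hstrict : StrictPrefs sat)
    (h₁ : IsMatching sat M₁) (h₂ : IsMatching sat M₂) (s₁ : OrdStable sat M₁)
    (s₂ : OrdStable sat M₂) (hxy : Adj sat x y) :
    max (wge sat M₁ x y) (wge sat M₂ x y) - max (wgt sat M₁ x y) (wgt sat M₂ x y) ≤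
      min (wge sat M₁ y x) (wge sat M₂ y x) - min (wgt sat M₁ y x) (wgt sat M₂ y x) := by
  have le₁ := s₁.one_le_wge_add_wgt h₁ hstrict hxy
  have le₂ := s₂.one_le_wge_add_wgt h₂ hstrict hxy
  have tight₁ := s₁.wge_add_wgt_eq_one h₁ hstrict (x := x) (y := y)
  have tight₂ := s₂.wge_add_wgt_eq_one h₂ hstrict (x := x) (y := y)
  rw [hstrict.wge_eq_add_wgt M₁ hxy] at le₁ tight₁
  rw [hstrict.wge_eq_add_wgt M₂ hxy] at le₂ tight₂
  rw [hstrict.wge_eq_add_wgt M₁ hxy, hstrict.wge_eq_add_wgt M₂ hxy,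
    hstrict.wge_eq_add_wgt M₁ hxy.symm, hstrict.wge_eq_add_wgt M₂ hxy.symm, h₁.symm y x,
    h₂.symm y x, sub_le_sub_iff]
  -- Transfer the weight of the edge from the maximum to the minimum, one matching at a time.
  calc max (M₁ x y + wgt sat M₁ x y) (M₂ x y + wgt sat M₂ x y) +
        min (wgt sat M₁ y x) (wgt sat M₂ y x)
      ≤ max (wgt sat M₁ x y) (M₂ x y + wgt sat M₂ x y) +
        min (M₁ x y + wgt sat M₁ y x) (wgt sat M₂ y x) :=
        max_add_min_le_max_add_min (h₁.nonneg x y) fun h ↦ (tight₁ h).trans_le le₂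
    _ = max (M₂ x y + wgt sat M₂ x y) (wgt sat M₁ x y) +
        min (wgt sat M₂ y x) (M₁ x y + wgt sat M₁ y x) := by rw [max_comm, min_comm]
    _ ≤ max (wgt sat M₂ x y) (wgt sat M₁ x y) +
        min (M₂ x y + wgt sat M₂ y x) (M₁ x y + wgt sat M₁ y x) :=
        max_add_min_le_max_add_min (h₂.nonneg x y) fun h ↦ by linarith [tight₂ h]
    _ = min (M₁ x y + wgt sat M₁ y x) (M₂ x y + wgt sat M₂ y x) +
        max (wgt sat M₁ x y) (wgt sat M₂ x y) := by rw [add_comm, max_comm, min_comm]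

theorem osmJoin_le_osmMeet_compl (hstrict : StrictPrefs sat) (hbip : BipartiteWith sat U)
    (h₁ : IsMatching sat M₁) (h₂ : IsMatching sat M₂) (s₁ : OrdStable sat M₁)
    (s₂ : OrdStable sat M₂) : osmJoin sat U M₁ M₂ ≤ osmMeet sat Uᶜ M₁ M₂ := by
  have hmeet := osmMeet_isEdgeWeight hbip.compl M₁ M₂
  refine (osmJoin_isEdgeWeight hbip M₁ M₂).le_of_forall_mem hmeet hbip fun x hx y hxy ↦ ?_
  calc osmJoin sat U M₁ M₂ x y
      = max (wge sat M₁ x y) (wge sat M₂ x y) - max (wgt sat M₁ x y) (wgt sat M₂ x y) :=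
        osmCombine_apply hx hxy
    _ ≤ min (wge sat M₁ y x) (wge sat M₂ y x) - min (wgt sat M₁ y x) (wgt sat M₂ y x) :=
        max_wge_sub_max_wgt_le_min_wge_sub_min_wgt hstrict h₁ h₂ s₁ s₂ hxy
    _ = osmMeet sat Uᶜ M₁ M₂ y x := (osmCombine_apply ((hbip x y hxy).1 hx) hxy.symm).symm
    _ = osmMeet sat Uᶜ M₁ M₂ x y := hmeet.symm y x

theorem osmJoin_eq_osmMeet_compl (hstrict : StrictPrefs sat) (hbip : BipartiteWith sat U)
    (h₁ : IsMatching sat M₁) (h₂ : IsMatching sat M₂) (s₁ : OrdStable sat M₁)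
    (s₂ : OrdStable sat M₂) : osmJoin sat U M₁ M₂ = osmMeet sat Uᶜ M₁ M₂ := by
  have join_compl_le := osmJoin_le_osmMeet_compl hstrict hbip.compl h₁ h₂ s₁ s₂
  rw [compl_compl] at join_compl_le
  refine eq_of_le_of_sum_sum_le (osmJoin_le_osmMeet_compl hstrict hbip h₁ h₂ s₁ s₂) ?_
  calc ∑ x, ∑ y, osmMeet sat Uᶜ M₁ M₂ x y
      ≤ ∑ x, ∑ y, osmJoin sat Uᶜ M₁ M₂ x y :=
        sum_sum_osmMeet_le_sum_sum_osmJoin hstrict hbip.compl h₁.support h₂.support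
    _ ≤ ∑ x, ∑ y, osmMeet sat U M₁ M₂ x y :=
        sum_le_sum fun x _ ↦ sum_le_sum fun y _ ↦ join_compl_le x y
    _ ≤ ∑ x, ∑ y, osmJoin sat U M₁ M₂ x y :=
        sum_sum_osmMeet_le_sum_sum_osmJoin hstrict hbip h₁.support h₂.support

theorem osmMeet_eq_osmJoin_compl (hstrict : StrictPrefs sat) (hbip : BipartiteWith sat U)
    (h₁ : IsMatching sat M₁) (h₂ : IsMatching sat M₂) (s₁ : OrdStable sat M₁)
    (s₂ : OrdStable sat M₂) : osmMeet sat U M₁ M₂ = osmJoin sat Uᶜ M₁ M₂ := by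
  rw [osmJoin_eq_osmMeet_compl hstrict hbip.compl h₁ h₂ s₁ s₂, compl_compl]

end Duality

section Closure

variable [Fintype V] {sat : V → V → ℚ} {U : Set V} {M₁ M₂ : V → V → ℝ}

theorem isMatching_osmJoin (hstrict : StrictPrefs sat) (hbip : BipartiteWith sat U)
    (h₁ : IsMatching sat M₁) (h₂ : IsMatching sat M₂) (s₁ : OrdStable sat M₁)
    (s₂ : OrdStable sat M₂) : IsMatching sat (osmJoin sat U M₁ M₂) where
  symm := (osmJoin_isEdgeWeight hbip M₁ M₂).symm
  nonneg := osmJoin_nonneg h₁.nonneg h₂.nonneg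
  support := (osmJoin_isEdgeWeight hbip M₁ M₂).support
  degree_le_one v := by
    by_cases hv : v ∈ U
    · rw [sum_osmJoin hstrict hv (h₁.support v) (h₂.support v)]
      exact max_le (h₁.degree_le_one v) (h₂.degree_le_one v)
    · rw [osmJoin_eq_osmMeet_compl hstrict hbip h₁ h₂ s₁ s₂,
        sum_osmMeet (U := Uᶜ) hstrict hv (h₁.support v) (h₂.support v)]
      exact min_le_of_left_le (h₁.degree_le_one v)

theorem ordStable_osmJoin (hstrict : StrictPrefs sat) (hbip : BipartiteWith sat U)
    (h₁ : IsMatching sat M₁) (h₂ : IsMatching sat M₂) (s₁ : OrdStable sat M₁)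
    (s₂ : OrdStable sat M₂) : OrdStable sat (osmJoin sat U M₁ M₂) := by
  refine fun u v huv ↦ hbip.forall_adj_of_symm (P := fun u v ↦
    ¬(wge sat (osmJoin sat U M₁ M₂) u v < 1 ∧ wge sat (osmJoin sat U M₁ M₂) v u < 1))
    (fun u v h h' ↦ h h'.symm) (fun u hu w huw ↦ ?_) huv
  rintro ⟨hlt_u, hlt_w⟩
  rw [wge_osmJoin hstrict hu, max_lt_iff] at hlt_u
  rw [osmJoin_eq_osmMeet_compl hstrict hbip h₁ h₂ s₁ s₂,
    wge_osmMeet hstrict ((hbip u w huw).1 hu), min_lt_iff] at hlt_w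
  rcases hlt_w with hlt | hlt
  · exact s₁ u w huw ⟨hlt_u.1, hlt⟩
  · exact s₂ u w huw ⟨hlt_u.2, hlt⟩

theorem isMatching_osmMeet (hstrict : StrictPrefs sat) (hbip : BipartiteWith sat U)
    (h₁ : IsMatching sat M₁) (h₂ : IsMatching sat M₂) (s₁ : OrdStable sat M₁)
    (s₂ : OrdStable sat M₂) : IsMatching sat (osmMeet sat U M₁ M₂) := by
  rw [osmMeet_eq_osmJoin_compl hstrict hbip h₁ h₂ s₁ s₂]
  exact isMatching_osmJoin hstrict hbip.compl h₁ h₂ s₁ s₂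

theorem ordStable_osmMeet (hstrict : StrictPrefs sat) (hbip : BipartiteWith sat U)
    (h₁ : IsMatching sat M₁) (h₂ : IsMatching sat M₂) (s₁ : OrdStable sat M₁)
    (s₂ : OrdStable sat M₂) : OrdStable sat (osmMeet sat U M₁ M₂) := by
  rw [osmMeet_eq_osmJoin_compl hstrict hbip h₁ h₂ s₁ s₂]
  exact ordStable_osmJoin hstrict hbip.compl h₁ h₂ s₁ s₂

end Closure

section Lattice

/-- An ordinally stable fractional matching. The part `U` does not enter the data: it is recorded in
the type because it determines the order `≽_U`. -/
@[ext]
structure StableMatching [Fintype V] (sat : V → V → ℚ) (U : Set V) where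
  weight : V → V → ℝ
  isMatching : IsMatching sat weight
  ordStable : OrdStable sat weight

namespace StableMatching

variable [Fintype V] {sat : V → V → ℚ} {U : Set V}

/-- The order in which `M ≤ N` means `N ≽_U M`. -/
instance : LE (StableMatching sat U) where
  le M N := DomU sat U N.weight M.weight

instance : LT (StableMatching sat U) where
  lt M N := M ≤ N ∧ ¬N ≤ M

/-- The cumulative weights `M(x, ≽ y)` of `M` on the edges `{x, y}` with `x ∈ U`. -/
noncomputable def cumulative (M : StableMatching sat U)
    (e : {e : V × V // e.1 ∈ U ∧ Adj sat e.1 e.2}) : ℝ :=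
  wge sat M.weight e.1.1 e.1.2

theorem cumulative_le_cumulative {M N : StableMatching sat U} :
    M.cumulative ≤ N.cumulative ↔ M ≤ N :=
  ⟨fun h x y hx hxy ↦ h ⟨(x, y), hx, hxy⟩, fun h e ↦ h e.1.1 e.1.2 e.2.1 e.2.2⟩

theorem cumulative_injective (hstrict : StrictPrefs sat) (hbip : BipartiteWith sat U) :
    Function.Injective (cumulative : StableMatching sat U → _) := by
  intro M N hMN
  have hU : ∀ x ∈ U, ∀ y, Adj sat x y → M.weight x y = N.weight x y := fun x hx _ ↦
    hstrict.eq_of_wge_eq fun y hxy ↦ congrFun hMN ⟨(x, y), hx, hxy⟩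
  have hM := M.isMatching.isEdgeWeight
  have hN := N.isMatching.isEdgeWeight
  exact StableMatching.ext <| le_antisymm
    (hM.le_of_forall_mem hN hbip fun x hx y hxy ↦ (hU x hx y hxy).le)
    (hN.le_of_forall_mem hM hbip fun x hx y hxy ↦ (hU x hx y hxy).ge)

/-- The distributive lattice of ordinally stable fractional matchings, with join `osmJoin` and meet
`osmMeet`; it is not an instance because closure depends on the hypotheses. -/
noncomputable abbrev distribLattice (hstrict : StrictPrefs sat) (hbip : BipartiteWith sat U) :
    DistribLattice (StableMatching sat U) :=
  letI : Max (StableMatching sat U) := ⟨fun M N ↦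
    ⟨osmJoin sat U M.weight N.weight,
      isMatching_osmJoin hstrict hbip M.isMatching N.isMatching M.ordStable N.ordStable,
      ordStable_osmJoin hstrict hbip M.isMatching N.isMatching M.ordStable N.ordStable⟩⟩
  letI : Min (StableMatching sat U) := ⟨fun M N ↦
    ⟨osmMeet sat U M.weight N.weight,
      isMatching_osmMeet hstrict hbip M.isMatching N.isMatching M.ordStable N.ordStable,
      ordStable_osmMeet hstrict hbip M.isMatching N.isMatching M.ordStable N.ordStable⟩⟩
  (cumulative_injective hstrict hbip).distribLattice cumulative cumulative_le_cumulative
    (lt_iff_le_not_ge.trans (and_congr cumulative_le_cumulative cumulative_le_cumulative.not))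
    (fun _ _ ↦ funext fun e ↦ wge_osmJoin hstrict e.2.1)
    (fun _ _ ↦ funext fun e ↦ wge_osmMeet hstrict e.2.1)

end StableMatching

end Lattice

/-- for bipartite instances with strict preferences, the ordinally stable
fractional matchings are closed under join and meet; the join is a least upper bound and
the meet a greatest lower bound with respect to `≽_U`, and the distributive law holds
(up to mutual `≽_U`-domination), so the ordinally stable matchings form a distributive
lattice under `≽_U` with join `∨` and meet `∧`. -/
theorem ordinallyStable_distributive_lattice [Fintype V]
    (sat : V → V → ℚ) (U : Set V)
    (hinst : IsInstance sat) (hstrict : StrictPrefs sat) (hbip : BipartiteWith sat U) :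
    (∀ M₁ M₂ : V → V → ℝ,
      IsMatching sat M₁ → IsMatching sat M₂ → OrdStable sat M₁ → OrdStable sat M₂ →
      -- closure under join and meet:
      (IsMatching sat (osmJoin sat U M₁ M₂) ∧ OrdStable sat (osmJoin sat U M₁ M₂)) ∧
      (IsMatching sat (osmMeet sat U M₁ M₂) ∧ OrdStable sat (osmMeet sat U M₁ M₂)) ∧
      -- the join is a least upper bound w.r.t. `≽_U`:
      (DomU sat U (osmJoin sat U M₁ M₂) M₁ ∧ DomU sat U (osmJoin sat U M₁ M₂) M₂ ∧
        ∀ N : V → V → ℝ, IsMatching sat N → OrdStable sat N →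
          DomU sat U N M₁ → DomU sat U N M₂ → DomU sat U N (osmJoin sat U M₁ M₂)) ∧
      -- the meet is a greatest lower bound w.r.t. `≽_U`:
      (DomU sat U M₁ (osmMeet sat U M₁ M₂) ∧ DomU sat U M₂ (osmMeet sat U M₁ M₂) ∧
        ∀ N : V → V → ℝ, IsMatching sat N → OrdStable sat N →
          DomU sat U M₁ N → DomU sat U M₂ N → DomU sat U (osmMeet sat U M₁ M₂) N)) ∧
    -- distributivity (up to `≽_U`-equivalence):
    (∀ M₁ M₂ M₃ : V → V → ℝ,
      IsMatching sat M₁ → IsMatching sat M₂ → IsMatching sat M₃ →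
      OrdStable sat M₁ → OrdStable sat M₂ → OrdStable sat M₃ →
      DomU sat U (osmMeet sat U M₁ (osmJoin sat U M₂ M₃))
        (osmJoin sat U (osmMeet sat U M₁ M₂) (osmMeet sat U M₁ M₃)) ∧
      DomU sat U (osmJoin sat U (osmMeet sat U M₁ M₂) (osmMeet sat U M₁ M₃))
        (osmMeet sat U M₁ (osmJoin sat U M₂ M₃))) := by
  let := StableMatching.distribLattice hstrict hbip
  refine ⟨fun M₁ M₂ h₁ h₂ s₁ s₂ ↦ ?_, fun M₁ M₂ M₃ h₁ h₂ h₃ s₁ s₂ s₃ ↦ ?_⟩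
  · let S₁ : StableMatching sat U := ⟨M₁, h₁, s₁⟩
    let S₂ : StableMatching sat U := ⟨M₂, h₂, s₂⟩
    refine ⟨⟨(S₁ ⊔ S₂).isMatching, (S₁ ⊔ S₂).ordStable⟩,
      ⟨(S₁ ⊓ S₂).isMatching, (S₁ ⊓ S₂).ordStable⟩,
      ⟨le_sup_left (a := S₁) (b := S₂), le_sup_right (a := S₁) (b := S₂), fun N hN sN d₁ d₂ ↦ ?_⟩,
      inf_le_left (a := S₁) (b := S₂), inf_le_right (a := S₁) (b := S₂), fun N hN sN d₁ d₂ ↦ ?_⟩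
    · exact sup_le (a := S₁) (b := S₂) (c := ⟨N, hN, sN⟩) d₁ d₂
    · exact le_inf (a := S₁) (b := S₂) (c := ⟨N, hN, sN⟩) d₁ d₂
  · let S₁ : StableMatching sat U := ⟨M₁, h₁, s₁⟩
    let S₂ : StableMatching sat U := ⟨M₂, h₂, s₂⟩
    let S₃ : StableMatching sat U := ⟨M₃, h₃, s₃⟩
    have distrib : S₁ ⊓ (S₂ ⊔ S₃) = S₁ ⊓ S₂ ⊔ S₁ ⊓ S₃ := inf_sup_left S₁ S₂ S₃
    exact ⟨distrib.ge, distrib.le⟩
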